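/- Let Ĝ be the result of eliminating the function symbol f from the EUF formula G by the nested-ITE construction with fresh domain variables vf_1,...,vf_n. Any interpretation Ĵ of the symbols occurring in Ĝ can be extended to an interpretation J of the symbols occurring in both Ĝ and G such that for every subexpression E of G, J[E] = J[Ê] = Ĵ[Ê]. -/

import Mathlib

mutual
inductive EufTerm (Fn Pr : Type) : Type
  | app : Fn → List (EufTerm Fn Pr) → EufTerm Fn Pr
  | ite : EufFormula Fn Pr → EufTerm Fn Pr → EufTerm Fn Pr → EufTerm Fn Pr
inductive EufFormula (Fn Pr : Type) : Type
  | tt : EufFormula Fn Pr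
  | ff : EufFormula Fn Pr
  | not : EufFormula Fn Pr → EufFormula Fn Pr
  | and : EufFormula Fn Pr → EufFormula Fn Pr → EufFormula Fn Pr
  | or : EufFormula Fn Pr → EufFormula Fn Pr → EufFormula Fn Pr
  | eq : EufTerm Fn Pr → EufTerm Fn Pr → EufFormula Fn Pr
  | papp : Pr → List (EufTerm Fn Pr) → EufFormula Fn Pr
end

structure Interp (Fn Pr : Type) (D : Type u) where
  fn : Fn → List D → D
  pr : Pr → List D → Bool

open Classical in
mutual
noncomputable def evalT {Fn Pr : Type} {D : Type} (I : Interp Fn Pr D) : EufTerm Fn Pr → D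
  | .app f args => I.fn f (args.attach.map (fun t => evalT I t.1))
  | .ite G T1 T2 => if evalF I G then evalT I T1 else evalT I T2
termination_by t => sizeOf t
decreasing_by
  all_goals simp_wf
  all_goals try omega
  all_goals (have := List.sizeOf_lt_of_mem t.2; omega)
noncomputable def evalF {Fn Pr : Type} {D : Type} (I : Interp Fn Pr D) : EufFormula Fn Pr → Bool
  | .tt => true
  | .ff => false
  | .not G => !evalF I G
  | .and G1 G2 => evalF I G1 && evalF I G2
  | .or G1 G2 => evalF I G1 || evalF I G2
  | .eq T1 T2 => decide (evalT I T1 = evalT I T2)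
  | .papp p args => I.pr p (args.attach.map (fun t => evalT I t.1))
termination_by g => sizeOf g
decreasing_by
  all_goals simp_wf
  all_goals try omega
  all_goals (have := List.sizeOf_lt_of_mem t.2; omega)
end
def ValidOn {Fn Pr : Type} (F : EufFormula Fn Pr) (D : Type) : Prop :=
  ∀ I : Interp Fn Pr D, evalF I F = true

def UniversallyValid {Fn Pr : Type} (F : EufFormula Fn Pr) : Prop :=
  ∀ D : Type, Nonempty D → ValidOn F D

/-- Expressions: terms or formulas. -/
inductive EufExpr (Fn Pr : Type) : Type
  | t : EufTerm Fn Pr → EufExpr Fn Pr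
  | f : EufFormula Fn Pr → EufExpr Fn Pr

/-- Immediate (proper) subexpression relation. -/
inductive ImmSub {Fn Pr : Type} : EufExpr Fn Pr → EufExpr Fn Pr → Prop
  | appArg {g : Fn} {args : List (EufTerm Fn Pr)} {T : EufTerm Fn Pr} :
      T ∈ args → ImmSub (.t T) (.t (.app g args))
  | iteC {G : EufFormula Fn Pr} {T1 T2 : EufTerm Fn Pr} : ImmSub (.f G) (.t (.ite G T1 T2))
  | ite1 {G : EufFormula Fn Pr} {T1 T2 : EufTerm Fn Pr} : ImmSub (.t T1) (.t (.ite G T1 T2))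
  | ite2 {G : EufFormula Fn Pr} {T1 T2 : EufTerm Fn Pr} : ImmSub (.t T2) (.t (.ite G T1 T2))
  | not {G : EufFormula Fn Pr} : ImmSub (.f G) (.f (.not G))
  | andL {G1 G2 : EufFormula Fn Pr} : ImmSub (.f G1) (.f (.and G1 G2))
  | andR {G1 G2 : EufFormula Fn Pr} : ImmSub (.f G2) (.f (.and G1 G2))
  | orL {G1 G2 : EufFormula Fn Pr} : ImmSub (.f G1) (.f (.or G1 G2))
  | orR {G1 G2 : EufFormula Fn Pr} : ImmSub (.f G2) (.f (.or G1 G2))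
  | eqL {T1 T2 : EufTerm Fn Pr} : ImmSub (.t T1) (.f (.eq T1 T2))
  | eqR {T1 T2 : EufTerm Fn Pr} : ImmSub (.t T2) (.f (.eq T1 T2))
  | pappArg {p : Pr} {args : List (EufTerm Fn Pr)} {T : EufTerm Fn Pr} :
      T ∈ args → ImmSub (.t T) (.f (.papp p args))

/-- `SubExpr a b`: `a` occurs (as a subexpression) in `b`. -/
def SubExpr {Fn Pr : Type} (a b : EufExpr Fn Pr) : Prop := Relation.ReflTransGen ImmSub a b

def TermInT {Fn Pr : Type} (T S : EufTerm Fn Pr) : Prop := SubExpr (.t T) (.t S)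
def TermInF {Fn Pr : Type} (T : EufTerm Fn Pr) (F : EufFormula Fn Pr) : Prop :=
  SubExpr (.t T) (.f F)
def FormulaInT {Fn Pr : Type} (G : EufFormula Fn Pr) (S : EufTerm Fn Pr) : Prop :=
  SubExpr (.f G) (.t S)
def FormulaInF {Fn Pr : Type} (G F : EufFormula Fn Pr) : Prop := SubExpr (.f G) (.f F)

def IsAppTerm {Fn Pr : Type} : EufTerm Fn Pr → Prop
  | .app _ _ => True
  | _ => False

/-- `𝒯(F)`: the function application terms occurring in `F`. -/
def AppTermsF {Fn Pr : Type} (F : EufFormula Fn Pr) : Set (EufTerm Fn Pr) :=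
  {T | IsAppTerm T ∧ TermInF T F}

/-- A function symbol occurs in `F` when some application of it occurs in `F`. -/
def FnInF {Fn Pr : Type} (g : Fn) (F : EufFormula Fn Pr) : Prop :=
  ∃ args, TermInF (EufTerm.app g args) F

def PrInF {Fn Pr : Type} (p : Pr) (F : EufFormula Fn Pr) : Prop :=
  ∃ args, FormulaInF (EufFormula.papp p args) F

/-- `I` is diverse for `F` with respect to the set `Sg` of function symbols. -/
def DiverseFor {Fn Pr D : Type} (I : Interp Fn Pr D) (F : EufFormula Fn Pr)
    (Sg : Set Fn) : Prop :=
  ∀ (g : Fn) (args : List (EufTerm Fn Pr)), g ∈ Sg →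
    TermInF (EufTerm.app g args) F →
    ∀ T2 ∈ AppTermsF F, evalT I (EufTerm.app g args) = evalT I T2 →
      ∃ args2, T2 = EufTerm.app g args2 ∧
        List.Forall₂ (fun a b => evalT I a = evalT I b) args args2

mutual
/-- PEUF g-terms, where `isP` designates the p-function symbols. -/
inductive IsGTerm {Fn Pr : Type} (isP : Fn → Prop) : EufTerm Fn Pr → Prop
  | ite {G : EufFormula Fn Pr} {T1 T2 : EufTerm Fn Pr} :
      IsGFormula isP G → IsGTerm isP T1 → IsGTerm isP T2 → IsGTerm isP (.ite G T1 T2)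
  | app {g : Fn} {args : List (EufTerm Fn Pr)} :
      ¬ isP g → (∀ T ∈ args, IsPTerm isP T) → IsGTerm isP (.app g args)
/-- PEUF p-terms. -/
inductive IsPTerm {Fn Pr : Type} (isP : Fn → Prop) : EufTerm Fn Pr → Prop
  | g {T : EufTerm Fn Pr} : IsGTerm isP T → IsPTerm isP T
  | ite {G : EufFormula Fn Pr} {T1 T2 : EufTerm Fn Pr} :
      IsGFormula isP G → IsPTerm isP T1 → IsPTerm isP T2 → IsPTerm isP (.ite G T1 T2)
  | app {g : Fn} {args : List (EufTerm Fn Pr)} :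
      isP g → (∀ T ∈ args, IsPTerm isP T) → IsPTerm isP (.app g args)
/-- PEUF g-formulas. -/
inductive IsGFormula {Fn Pr : Type} (isP : Fn → Prop) : EufFormula Fn Pr → Prop
  | tt : IsGFormula isP .tt
  | ff : IsGFormula isP .ff
  | not {G : EufFormula Fn Pr} : IsGFormula isP G → IsGFormula isP (.not G)
  | and {G1 G2 : EufFormula Fn Pr} :
      IsGFormula isP G1 → IsGFormula isP G2 → IsGFormula isP (.and G1 G2)
  | or {G1 G2 : EufFormula Fn Pr} :
      IsGFormula isP G1 → IsGFormula isP G2 → IsGFormula isP (.or G1 G2)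
  | eq {T1 T2 : EufTerm Fn Pr} :
      IsGTerm isP T1 → IsGTerm isP T2 → IsGFormula isP (.eq T1 T2)
  | papp {p : Pr} {args : List (EufTerm Fn Pr)} :
      (∀ T ∈ args, IsPTerm isP T) → IsGFormula isP (.papp p args)
/-- PEUF p-formulas. -/
inductive IsPFormula {Fn Pr : Type} (isP : Fn → Prop) : EufFormula Fn Pr → Prop
  | g {G : EufFormula Fn Pr} : IsGFormula isP G → IsPFormula isP G
  | and {G1 G2 : EufFormula Fn Pr} :
      IsPFormula isP G1 → IsPFormula isP G2 → IsPFormula isP (.and G1 G2)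
  | or {G1 G2 : EufFormula Fn Pr} :
      IsPFormula isP G1 → IsPFormula isP G2 → IsPFormula isP (.or G1 G2)
  | eq {T1 T2 : EufTerm Fn Pr} :
      IsPTerm isP T1 → IsPTerm isP T2 → IsPFormula isP (.eq T1 T2)
end

/-- The p-function symbols occurring in `F`. -/
def PSymbolsIn {Fn Pr : Type} (isP : Fn → Prop) (F : EufFormula Fn Pr) : Set Fn :=
  {g | isP g ∧ FnInF g F}

/-- `I` is maximally diverse for the p-formula `F`. -/
def MaxDiverse {Fn Pr D : Type} (isP : Fn → Prop) (I : Interp Fn Pr D)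
    (F : EufFormula Fn Pr) : Prop :=
  DiverseFor I F (PSymbolsIn isP F)

/-- `I'` refines `I` on the term set `Ts`. -/
def RefinesOn {Fn Pr D D' : Type} (I' : Interp Fn Pr D') (I : Interp Fn Pr D)
    (Ts : Set (EufTerm Fn Pr)) : Prop :=
  ∀ T1 ∈ Ts, ∀ T2 ∈ Ts, evalT I' T1 = evalT I' T2 → evalT I T1 = evalT I T2

def ProperRefinesOn {Fn Pr D D' : Type} (I' : Interp Fn Pr D') (I : Interp Fn Pr D)
    (Ts : Set (EufTerm Fn Pr)) : Prop :=
  RefinesOn I' I Ts ∧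
    ∃ T1 ∈ Ts, ∃ T2 ∈ Ts, evalT I T1 = evalT I T2 ∧ evalT I' T1 ≠ evalT I' T2
open Classical in
mutual
/-- Substitute the term `B` for each instance of the term `A`. -/
noncomputable def substT {Fn Pr : Type} (A B : EufTerm Fn Pr) : EufTerm Fn Pr → EufTerm Fn Pr
  | .app g args =>
      if EufTerm.app g args = A then B
      else .app g (args.attach.map (fun t => substT A B t.1))
  | .ite G T1 T2 =>
      if EufTerm.ite G T1 T2 = A then B
      else .ite (substF A B G) (substT A B T1) (substT A B T2)
termination_by t => sizeOf t
decreasing_by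
  all_goals simp_wf
  all_goals try omega
  all_goals (have := List.sizeOf_lt_of_mem t.2; omega)
noncomputable def substF {Fn Pr : Type} (A B : EufTerm Fn Pr) : EufFormula Fn Pr → EufFormula Fn Pr
  | .tt => .tt
  | .ff => .ff
  | .not G => .not (substF A B G)
  | .and G1 G2 => .and (substF A B G1) (substF A B G2)
  | .or G1 G2 => .or (substF A B G1) (substF A B G2)
  | .eq T1 T2 => .eq (substT A B T1) (substT A B T2)
  | .papp p args => .papp p (args.attach.map (fun t => substT A B t.1))
termination_by g => sizeOf g
decreasing_by
  all_goals simp_wf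
  all_goals try omega
  all_goals (have := List.sizeOf_lt_of_mem t.2; omega)
end

open Classical in
mutual
/-- Substitute the formula `B` for each instance of the formula `A` inside a term. -/
noncomputable def fsubstT {Fn Pr : Type} (A B : EufFormula Fn Pr) : EufTerm Fn Pr → EufTerm Fn Pr
  | .app g args => .app g (args.attach.map (fun t => fsubstT A B t.1))
  | .ite G T1 T2 => .ite (fsubstF A B G) (fsubstT A B T1) (fsubstT A B T2)
termination_by t => sizeOf t
decreasing_by
  all_goals simp_wf
  all_goals try omega
  all_goals (have := List.sizeOf_lt_of_mem t.2; omega)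
/-- Substitute the formula `B` for each instance of the formula `A`. -/
noncomputable def fsubstF {Fn Pr : Type} (A B : EufFormula Fn Pr) : EufFormula Fn Pr → EufFormula Fn Pr
  | .tt => if EufFormula.tt = A then B else .tt
  | .ff => if EufFormula.ff = A then B else .ff
  | .not G => if EufFormula.not G = A then B else .not (fsubstF A B G)
  | .and G1 G2 => if EufFormula.and G1 G2 = A then B else .and (fsubstF A B G1) (fsubstF A B G2)
  | .or G1 G2 => if EufFormula.or G1 G2 = A then B else .or (fsubstF A B G1) (fsubstF A B G2)
  | .eq T1 T2 => if EufFormula.eq T1 T2 = A then B else .eq (fsubstT A B T1) (fsubstT A B T2)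
  | .papp p args =>
      if EufFormula.papp p args = A then B
      else .papp p (args.attach.map (fun t => fsubstT A B t.1))
termination_by g => sizeOf g
decreasing_by
  all_goals simp_wf
  all_goals try omega
  all_goals (have := List.sizeOf_lt_of_mem t.2; omega)
end
/-- The formula `C_{i,j}`: conjunction of the equations between transformed arguments. -/
def Cform {Fn Pr : Type} (hatS : ℕ → ℕ → EufTerm Fn Pr) (k i j : ℕ) : EufFormula Fn Pr :=
  ((List.range' 1 k).map (fun l => EufFormula.eq (hatS i l) (hatS j l))).foldr .and .tt

/-- The nested-ITE term `V_{i,j}`. -/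
def Vterm {Fn Pr : Type} (vf : ℕ → Fn) (hatS : ℕ → ℕ → EufTerm Fn Pr) (k i : ℕ) :
    ℕ → EufTerm Fn Pr
  | j =>
    if h : j < i then
      .ite (Cform hatS k i j) (.app (vf j) []) (Vterm vf hatS k i (j+1))
    else .app (vf i) []
termination_by j => i - j
decreasing_by omega

/-- The nested-ITE term `U_i` replacing the i-th f-application. -/
def Uterm {Fn Pr : Type} (vf : ℕ → Fn) (hatS : ℕ → ℕ → EufTerm Fn Pr) (k i : ℕ) :
    EufTerm Fn Pr :=
  Vterm vf hatS k i 1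

/-- `stepT … i E = E⁽ⁱ⁾` for terms. -/
noncomputable def stepT {Fn Pr : Type} (Ts : ℕ → EufTerm Fn Pr) (vf : ℕ → Fn)
    (hatS : ℕ → ℕ → EufTerm Fn Pr) (k : ℕ) : ℕ → EufTerm Fn Pr → EufTerm Fn Pr
  | 0, E => E
  | i+1, E =>
      substT (stepT Ts vf hatS k i (Ts (i+1))) (Uterm vf hatS k (i+1)) (stepT Ts vf hatS k i E)

/-- `stepF … i E = E⁽ⁱ⁾` for formulas. -/
noncomputable def stepF {Fn Pr : Type} (Ts : ℕ → EufTerm Fn Pr) (vf : ℕ → Fn)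
    (hatS : ℕ → ℕ → EufTerm Fn Pr) (k : ℕ) : ℕ → EufFormula Fn Pr → EufFormula Fn Pr
  | 0, E => E
  | i+1, E =>
      substF (stepT Ts vf hatS k i (Ts (i+1))) (Uterm vf hatS k (i+1)) (stepF Ts vf hatS k i E)

/-- The f-order of a term: the largest index `i ∈ [1,n]` with `Ts i` occurring in `E`. -/
noncomputable def fordT {Fn Pr : Type} (n : ℕ) (Ts : ℕ → EufTerm Fn Pr)
    (E : EufTerm Fn Pr) : ℕ :=
  sSup {i | 1 ≤ i ∧ i ≤ n ∧ TermInT (Ts i) E}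

/-- The f-order of a formula. -/
noncomputable def fordF {Fn Pr : Type} (n : ℕ) (Ts : ℕ → EufTerm Fn Pr)
    (E : EufFormula Fn Pr) : ℕ :=
  sSup {i | 1 ≤ i ∧ i ≤ n ∧ TermInF (Ts i) E}

/-- `Ê` for terms: `E⁽ᵐ⁾` where `m` is the f-order of `E`. -/
noncomputable def hatT {Fn Pr : Type} (n : ℕ) (Ts : ℕ → EufTerm Fn Pr) (vf : ℕ → Fn)
    (hatS : ℕ → ℕ → EufTerm Fn Pr) (k : ℕ) (E : EufTerm Fn Pr) : EufTerm Fn Pr :=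
  stepT Ts vf hatS k (fordT n Ts E) E

/-- `Ê` for formulas. -/
noncomputable def hatF {Fn Pr : Type} (n : ℕ) (Ts : ℕ → EufTerm Fn Pr) (vf : ℕ → Fn)
    (hatS : ℕ → ℕ → EufTerm Fn Pr) (k : ℕ) (E : EufFormula Fn Pr) : EufFormula Fn Pr :=
  stepF Ts vf hatS k (fordF n Ts E) E

/-- Hypotheses of the nested-ITE elimination of the function symbol `f` from `G`:
`Ts 1, …, Ts n` are the syntactically distinct f-application terms of `G` (ordered so that
subterms precede superterms) with argument terms `S i 1, …, S i k`; the `vf i` are fresh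
domain variables; and `hatS i l` is the transformed argument term `Ŝ_{i,l}`. -/
structure ElimHyps {Fn Pr : Type} (G : EufFormula Fn Pr) (f : Fn) (k n : ℕ)
    (Ts : ℕ → EufTerm Fn Pr) (S : ℕ → ℕ → EufTerm Fn Pr) (vf : ℕ → Fn)
    (hatS : ℕ → ℕ → EufTerm Fn Pr) : Prop where
  k_pos : 1 ≤ k
  ts_app : ∀ i, 1 ≤ i → i ≤ n → Ts i = EufTerm.app f ((List.range' 1 k).map (S i))
  ts_occurs : ∀ i, 1 ≤ i → i ≤ n → TermInF (Ts i) G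
  ts_distinct : ∀ i j, 1 ≤ i → i ≤ n → 1 ≤ j → j ≤ n → Ts i = Ts j → i = j
  ts_complete : ∀ args, TermInF (EufTerm.app f args) G →
      ∃ i, 1 ≤ i ∧ i ≤ n ∧ EufTerm.app f args = Ts i
  ts_order : ∀ i j, 1 ≤ i → i ≤ n → 1 ≤ j → j ≤ n → TermInT (Ts i) (Ts j) → i ≠ j → i < j
  vf_fresh : ∀ i, 1 ≤ i → i ≤ n → ¬ FnInF (vf i) G
  vf_inj : ∀ i j, 1 ≤ i → i ≤ n → 1 ≤ j → j ≤ n → vf i = vf j → i = j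
  vf_ne_f : ∀ i, 1 ≤ i → i ≤ n → vf i ≠ f
  hatS_spec : ∀ j l, 1 ≤ j → j ≤ n → 1 ≤ l → l ≤ k →
      hatS j l = stepT Ts vf hatS k (fordT n Ts (S j l)) (S j l)

/-- `Ĝ = G⁽ⁿ⁾`: the result of eliminating `f` from `G`. -/
noncomputable def elimResult {Fn Pr : Type} (G : EufFormula Fn Pr) (n : ℕ)
    (Ts : ℕ → EufTerm Fn Pr) (vf : ℕ → Fn) (hatS : ℕ → ℕ → EufTerm Fn Pr) (k : ℕ) :
    EufFormula Fn Pr :=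
  stepF Ts vf hatS k n G

/-!
Let `J` agree with `Ĵ` except at `f`, where `J f` sends a tuple of values `ds` to `Ĵ(vf_j)` for the
least `j` such that `ds` is the tuple of values under `Ĵ` of `Ŝ_{j,1}, …, Ŝ_{j,k}`. The nested ITE
`U_i` computes precisely `Ĵ(vf_j)` for the least `j` whose transformed arguments agree with those of
`T_i`. Since the arguments of `T_i` have `f`-order less than `i`, induction on `i` gives
`J[U_i] = J[T_i]`, so every elimination step preserves the valuation under `J`. On the other hand
`Ê` contains no application of `f`, hence has the same valuation under `J` and `Ĵ`.
-/

namespace EufExpr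

variable {Fn Pr D : Type} {I J : Interp Fn Pr D} {A B : EufTerm Fn Pr} {e e' : EufExpr Fn Pr}
  {g : Fn} {p : Pr}

theorem sizeOf_lt_of_immSub (h : ImmSub e e') : sizeOf e < sizeOf e' := by
  cases h with
  | appArg h | pappArg h =>
    have := List.sizeOf_lt_of_mem h
    simp only [t.sizeOf_spec, f.sizeOf_spec, EufTerm.app.sizeOf_spec,
      EufFormula.papp.sizeOf_spec]
    omega
  | _ => simp +arith

theorem wellFounded_immSub : WellFounded (@ImmSub Fn Pr) :=
  Subrelation.wf sizeOf_lt_of_immSub (measure sizeOf).wf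

theorem not_subExpr_of_immSub (h : ImmSub e e') : ¬ SubExpr e' e := fun h' =>
  wellFounded_immSub.transGen.irrefl.irrefl e' (Relation.TransGen.tail' h' h)

/-- The function symbol `g` occurs in the expression `e`; extends `FnInF` to all expressions. -/
def FnIn (g : Fn) (e : EufExpr Fn Pr) : Prop := ∃ args, SubExpr (.t (.app g args)) e

/-- The predicate symbol `p` occurs in the expression `e`; extends `PrInF` to all expressions. -/
def PrIn (p : Pr) (e : EufExpr Fn Pr) : Prop := ∃ args, SubExpr (.f (.papp p args)) e

theorem FnIn.mono (h : FnIn g e) (hs : SubExpr e e') : FnIn g e' :=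
  h.imp fun _ ha => ha.trans hs

theorem PrIn.mono (h : PrIn p e) (hs : SubExpr e e') : PrIn p e' :=
  h.imp fun _ ha => ha.trans hs

theorem fnIn_iff :
    FnIn g e ↔ (∃ args, e = .t (.app g args)) ∨ ∃ e', ImmSub e' e ∧ FnIn g e' := by
  constructor
  · rintro ⟨args, h⟩
    rcases h.cases_tail with rfl | ⟨e', h, hs⟩
    · exact .inl ⟨args, rfl⟩
    · exact .inr ⟨e', hs, args, h⟩
  · rintro (⟨args, rfl⟩ | ⟨e', hs, h⟩)
    · exact ⟨args, .refl⟩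
    · exact h.mono (.single hs)

theorem fnIn_app_nil {h : Fn} : FnIn g (.t (.app h []) : EufExpr Fn Pr) ↔ g = h := by
  rw [fnIn_iff]
  constructor
  · rintro (⟨args, h⟩ | ⟨_, ⟨⟩, _⟩)
    · cases h; rfl
    · contradiction
  · rintro rfl
    exact .inl ⟨[], rfl⟩

theorem fnIn_ite {F : EufFormula Fn Pr} :
    FnIn g (.t (.ite F A B)) ↔ FnIn g (.f F) ∨ FnIn g (.t A) ∨ FnIn g (.t B) := by
  rw [fnIn_iff]
  constructor
  · rintro (⟨args, ⟨⟩⟩ | ⟨_, ⟨⟩, h⟩)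
    exacts [.inl h, .inr (.inl h), .inr (.inr h)]
  · rintro (h | h | h)
    exacts [.inr ⟨_, .iteC, h⟩, .inr ⟨_, .ite1, h⟩, .inr ⟨_, .ite2, h⟩]

theorem fnIn_eq : FnIn g (.f (.eq A B)) ↔ FnIn g (.t A) ∨ FnIn g (.t B) := by
  rw [fnIn_iff]
  constructor
  · rintro (⟨args, ⟨⟩⟩ | ⟨_, ⟨⟩, h⟩)
    exacts [.inl h, .inr h]
  · rintro (h | h)
    exacts [.inr ⟨_, .eqL, h⟩, .inr ⟨_, .eqR, h⟩]

theorem fnIn_foldr_and {L : List (EufFormula Fn Pr)} :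
    FnIn g (.f (L.foldr .and .tt)) ↔ ∃ F ∈ L, FnIn g (.f F) := by
  induction L with
  | nil =>
    rw [fnIn_iff]
    constructor
    · rintro (⟨_, ⟨⟩⟩ | ⟨_, ⟨⟩, _⟩)
    · simp
  | cons F L ih =>
    rw [List.exists_mem_cons_iff, ← ih, fnIn_iff]
    constructor
    · rintro (⟨args, ⟨⟩⟩ | ⟨_, ⟨⟩, h⟩)
      exacts [.inl h, .inr h]
    · rintro (h | h)
      exacts [.inr ⟨_, .andL, h⟩, .inr ⟨_, .andR, h⟩]

theorem evalT_app (I : Interp Fn Pr D) (g : Fn) (args : List (EufTerm Fn Pr)) :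
    evalT I (.app g args) = I.fn g (args.map (evalT I)) := by
  rw [evalT, List.attach_map_val]

theorem evalF_papp (I : Interp Fn Pr D) (p : Pr) (args : List (EufTerm Fn Pr)) :
    evalF I (.papp p args) = I.pr p (args.map (evalT I)) := by
  rw [evalF, List.attach_map_val]

theorem evalF_foldr_and {L : List (EufFormula Fn Pr)} :
    evalF I (L.foldr .and .tt) = true ↔ ∀ F ∈ L, evalF I F = true := by
  induction L with
  | nil => simp [evalF]
  | cons F L ih => simp [evalF, ih]

/-- The valuation `I[e]`: an element of the domain for a term, a truth value for a formula. -/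
noncomputable def eval (I : Interp Fn Pr D) : EufExpr Fn Pr → D ⊕ Bool
  | .t T => .inl (evalT I T)
  | .f F => .inr (evalF I F)

theorem eval_congr (hfn : ∀ g, FnIn g e → I.fn g = J.fn g)
    (hpr : ∀ p, PrIn p e → I.pr p = J.pr p) : eval I e = eval J e := by
  induction e using wellFounded_immSub.induction with
  | _ e ih =>
    have ih' (e') (h : ImmSub e' e) : eval I e' = eval J e' :=
      ih e' h (fun g hg => hfn g (hg.mono (.single h))) fun p hp => hpr p (hp.mono (.single h))
    have hT (T) (h : ImmSub (.t T) e) : evalT I T = evalT J T := Sum.inl.inj (ih' _ h)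
    have hF (F) (h : ImmSub (.f F) e) : evalF I F = evalF J F := Sum.inr.inj (ih' _ h)
    match e with
    | .t (.app g args) =>
      rw [eval, eval, evalT_app, evalT_app, hfn g ⟨args, .refl⟩,
        List.map_congr_left fun T h => hT T (.appArg h)]
    | .t (.ite F A B) => simp only [eval, evalT, hF F .iteC, hT A .ite1, hT B .ite2]
    | .f .tt | .f .ff => simp only [eval, evalF]
    | .f (.not F) => simp only [eval, evalF, hF F .not]
    | .f (.and F F') => simp only [eval, evalF, hF F .andL, hF F' .andR]
    | .f (.or F F') => simp only [eval, evalF, hF F .orL, hF F' .orR]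
    | .f (.eq A B) => rw [eval, eval, evalF, evalF, hT A .eqL, hT B .eqR]
    | .f (.papp p args) =>
      rw [eval, eval, evalF_papp, evalF_papp, hpr p ⟨args, .refl⟩,
        List.map_congr_left fun T h => hT T (.pappArg h)]

/-- The expression `e[A ← B]`: `substT` and `substF` as one operation on expressions. -/
noncomputable def subst (A B : EufTerm Fn Pr) : EufExpr Fn Pr → EufExpr Fn Pr
  | .t T => .t (substT A B T)
  | .f F => .f (substF A B F)

theorem subst_self (A B : EufTerm Fn Pr) : subst A B (.t A) = .t B := by
  cases A <;> simp [subst, substT]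

theorem subst_app {args : List (EufTerm Fn Pr)} (h : EufTerm.app g args ≠ A) :
    subst A B (.t (.app g args)) = .t (.app g (args.map (substT A B))) := by
  rw [subst, substT, if_neg h, List.attach_map_val]

theorem subst_ite {F : EufFormula Fn Pr} {T T' : EufTerm Fn Pr} (h : EufTerm.ite F T T' ≠ A) :
    subst A B (.t (.ite F T T')) = .t (.ite (substF A B F) (substT A B T) (substT A B T')) := by
  rw [subst, substT, if_neg h]

theorem subst_papp (p : Pr) (args : List (EufTerm Fn Pr)) :
    subst A B (.f (.papp p args)) = .f (.papp p (args.map (substT A B))) := by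
  rw [subst, substF, List.attach_map_val]

theorem eval_subst (h : evalT I A = evalT I B) (e : EufExpr Fn Pr) :
    eval I (subst A B e) = eval I e := by
  induction e using wellFounded_immSub.induction with
  | _ e ih =>
    have hT (T) (h : ImmSub (.t T) e) : evalT I (substT A B T) = evalT I T :=
      Sum.inl.inj (ih _ h)
    have hF (F) (h : ImmSub (.f F) e) : evalF I (substF A B F) = evalF I F :=
      Sum.inr.inj (ih _ h)
    by_cases heA : e = .t A
    · rw [heA, subst_self, eval, eval, h]
    match e with
    | .t (.app g args) =>
      rw [subst_app (heA <| congrArg t ·), eval, eval, evalT_app, evalT_app, List.map_map]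
      exact congrArg (Sum.inl <| I.fn g ·) (List.map_congr_left fun T h => hT T (.appArg h))
    | .t (.ite F T T') =>
      rw [subst_ite (heA <| congrArg t ·)]
      simp only [eval, evalT, hF F .iteC, hT T .ite1, hT T' .ite2]
    | .f .tt | .f .ff => simp only [subst, substF]
    | .f (.not F) => simp only [subst, substF, eval, evalF, hF F .not]
    | .f (.and F F') => simp only [subst, substF, eval, evalF, hF F .andL, hF F' .andR]
    | .f (.or F F') => simp only [subst, substF, eval, evalF, hF F .orL, hF F' .orR]
    | .f (.eq T T') => rw [subst, substF, eval, eval, evalF, evalF, hT T .eqL, hT T' .eqR]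
    | .f (.papp p args) =>
      rw [subst_papp, eval, eval, evalF_papp, evalF_papp, List.map_map]
      exact congrArg (Sum.inr <| I.pr p ·) (List.map_congr_left fun T h => hT T (.pappArg h))

theorem exists_immSub_of_immSub_subst (he : e ≠ .t A) (h : ImmSub e' (subst A B e)) :
    ∃ y, ImmSub y e ∧ subst A B y = e' := by
  match e with
  | .t (.app g args) =>
    rw [subst_app (he <| congrArg t ·)] at h
    cases h with
    | appArg h =>
      obtain ⟨T, hT, rfl⟩ := List.mem_map.1 h
      exact ⟨.t T, .appArg hT, rfl⟩
  | .t (.ite F T T') =>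
    rw [subst_ite (he <| congrArg t ·)] at h
    cases h
    exacts [⟨_, .iteC, rfl⟩, ⟨_, .ite1, rfl⟩, ⟨_, .ite2, rfl⟩]
  | .f (.papp p args) =>
    rw [subst_papp] at h
    cases h with
    | pappArg h =>
      obtain ⟨T, hT, rfl⟩ := List.mem_map.1 h
      exact ⟨.t T, .pappArg hT, rfl⟩
  | .f .tt | .f .ff => simp only [subst, substF] at h; cases h
  | .f (.not F) =>
    simp only [subst, substF] at h
    cases h
    exact ⟨_, .not, rfl⟩
  | .f (.and F F') =>
    simp only [subst, substF] at h
    cases h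
    exacts [⟨_, .andL, rfl⟩, ⟨_, .andR, rfl⟩]
  | .f (.or F F') =>
    simp only [subst, substF] at h
    cases h
    exacts [⟨_, .orL, rfl⟩, ⟨_, .orR, rfl⟩]
  | .f (.eq T T') =>
    simp only [subst, substF] at h
    cases h
    exacts [⟨_, .eqL, rfl⟩, ⟨_, .eqR, rfl⟩]

theorem subExpr_subst (h : SubExpr e' (subst A B e)) :
    SubExpr e' (.t B) ∨ ∃ y, SubExpr y e ∧ y ≠ .t A ∧ subst A B y = e' := by
  have self_or_subst (y) (hy : SubExpr y e) : SubExpr (subst A B y) (.t B) ∨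
      ∃ z, SubExpr z e ∧ z ≠ .t A ∧ subst A B z = subst A B y := by
    by_cases hyA : y = .t A
    · exact .inl (by rw [hyA, subst_self]; exact .refl)
    · exact .inr ⟨y, hy, hyA, rfl⟩
  induction h using Relation.ReflTransGen.head_induction_on with
  | refl => exact self_or_subst e .refl
  | head hs _ ih =>
    rcases ih with hB | ⟨y, hy, hyA, rfl⟩
    · exact .inl (hB.head hs)
    · obtain ⟨z, hz, rfl⟩ := exists_immSub_of_immSub_subst hyA hs
      exact self_or_subst z (hy.head hz)

theorem exists_app_of_subst_eq_app {args : List (EufTerm Fn Pr)} (he : e ≠ .t A)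
    (h : subst A B e = .t (.app g args)) : ∃ args', e = .t (.app g args') := by
  match e with
  | .t (.app g' args') =>
    rw [subst_app (he <| congrArg t ·)] at h
    cases h
    exact ⟨args', rfl⟩
  | .t (.ite F T T') =>
    rw [subst_ite (he <| congrArg t ·)] at h
    cases h

end EufExpr

open EufExpr

section NestedIte

variable {Fn Pr D : Type} {vf : ℕ → Fn} {hatS : ℕ → ℕ → EufTerm Fn Pr} {k i j : ℕ} {g : Fn}
  {I : Interp Fn Pr D}

/-- The tuple `(I[S_{i,1}], …, I[S_{i,k}])` of values of the `i`-th list of arguments. -/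
noncomputable def argValues (I : Interp Fn Pr D) (S : ℕ → ℕ → EufTerm Fn Pr) (k i : ℕ) : List D :=
  (List.range' 1 k).map fun l => evalT I (S i l)

theorem argValues_congr {I J : Interp Fn Pr D} {S S' : ℕ → ℕ → EufTerm Fn Pr}
    (h : ∀ l ∈ Set.Icc 1 k, evalT I (S i l) = evalT J (S' i l)) :
    argValues I S k i = argValues J S' k i :=
  List.map_congr_left fun l hl => h l (by rw [List.mem_range'_1] at hl; constructor <;> omega)

theorem evalF_cform : evalF I (Cform hatS k i j) = true ↔
    argValues I hatS k i = argValues I hatS k j := by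
  rw [Cform, evalF_foldr_and, List.forall_mem_map, argValues, argValues, List.map_inj_left]
  simp only [evalF, decide_eq_true_eq]

theorem exists_fnIn_of_fnIn_cform (h : FnIn g (.f (Cform hatS k i j))) :
    ∃ l ∈ Set.Icc 1 k, FnIn g (.t (hatS i l)) ∨ FnIn g (.t (hatS j l)) := by
  obtain ⟨F, hF, hg⟩ := fnIn_foldr_and.1 h
  obtain ⟨l, hl, rfl⟩ := List.mem_map.1 hF
  rw [List.mem_range'_1] at hl
  exact ⟨l, ⟨hl.1, by omega⟩, fnIn_eq.1 hg⟩

theorem vterm_self (vf : ℕ → Fn) (hatS : ℕ → ℕ → EufTerm Fn Pr) (k i : ℕ) :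
    Vterm vf hatS k i i = .app (vf i) [] := by
  rw [Vterm, dif_neg (lt_irrefl i)]

theorem vterm_of_lt (h : j < i) : Vterm vf hatS k i j =
    .ite (Cform hatS k i j) (.app (vf j) []) (Vterm vf hatS k i (j + 1)) := by
  rw [Vterm, dif_pos h]

theorem exists_fnIn_of_fnIn_vterm (hj : j ≤ i) (h : FnIn g (.t (Vterm vf hatS k i j))) :
    ∃ m ∈ Set.Icc j i, g = vf m ∨ ∃ l ∈ Set.Icc 1 k, FnIn g (.t (hatS m l)) := by
  induction hj using Nat.decreasingInduction with
  | self =>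
    rw [vterm_self, fnIn_app_nil] at h
    exact ⟨i, ⟨le_rfl, le_rfl⟩, .inl h⟩
  | of_succ j hj ih =>
    rw [vterm_of_lt hj, fnIn_ite, fnIn_app_nil] at h
    rcases h with hC | hv | hV
    · obtain ⟨l, hl, hi | hj'⟩ := exists_fnIn_of_fnIn_cform hC
      · exact ⟨i, ⟨hj.le, le_rfl⟩, .inr ⟨l, hl, hi⟩⟩
      · exact ⟨j, ⟨le_rfl, hj.le⟩, .inr ⟨l, hl, hj'⟩⟩
    · exact ⟨j, ⟨le_rfl, hj.le⟩, .inl hv⟩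
    · obtain ⟨m, hm, hg⟩ := ih hV
      exact ⟨m, ⟨Nat.le_of_succ_le hm.1, hm.2⟩, hg⟩

theorem evalT_vterm_of_isLeast {m : ℕ} (hj : j ≤ i)
    (hm : IsLeast {m | j ≤ m ∧ argValues I hatS k m = argValues I hatS k i} m) :
    evalT I (Vterm vf hatS k i j) = I.fn (vf m) [] := by
  induction hj using Nat.decreasingInduction with
  | self =>
    obtain rfl : m = i := le_antisymm (hm.2 ⟨le_rfl, rfl⟩) hm.1.1
    rw [vterm_self, evalT_app, List.map_nil]
  | of_succ j hj ih =>
    rw [vterm_of_lt hj, evalT]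
    split_ifs with hC
    · obtain rfl : m = j := le_antisymm (hm.2 ⟨le_rfl, (evalF_cform.1 hC).symm⟩) hm.1.1
      rw [evalT_app, List.map_nil]
    · have hmj : j ≠ m := by
        rintro rfl
        exact hC (evalF_cform.2 hm.1.2.symm)
      exact ih ⟨⟨hm.1.1.lt_of_ne hmj, hm.1.2⟩, fun x hx => hm.2 ⟨Nat.le_of_succ_le hx.1, hx.2⟩⟩

theorem evalT_uterm (hi : 1 ≤ i) : evalT I (Uterm vf hatS k i) =
    I.fn (vf (sInf {j | 1 ≤ j ∧ argValues I hatS k j = argValues I hatS k i})) [] :=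
  evalT_vterm_of_isLeast hi ⟨Nat.sInf_mem ⟨i, hi, rfl⟩, fun _ => Nat.sInf_le⟩

end NestedIte

namespace EufExpr

variable {Fn Pr : Type} {n m : ℕ} {Ts : ℕ → EufTerm Fn Pr} {e : EufExpr Fn Pr}

/-- The `f`-order `o_f(e)`: `fordT` and `fordF` as one function on expressions. -/
noncomputable def ford (n : ℕ) (Ts : ℕ → EufTerm Fn Pr) (e : EufExpr Fn Pr) : ℕ :=
  sSup {i | 1 ≤ i ∧ i ≤ n ∧ SubExpr (.t (Ts i)) e}

theorem le_ford (hm : m ∈ Set.Icc 1 n) (h : SubExpr (.t (Ts m)) e) : m ≤ ford n Ts e :=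
  le_csSup ⟨n, fun _ hi => hi.2.1⟩ ⟨hm.1, hm.2, h⟩

theorem ford_le_of_forall (h : ∀ i ∈ Set.Icc 1 n, SubExpr (.t (Ts i)) e → i ≤ m) :
    ford n Ts e ≤ m :=
  csSup_le' fun i hi => h i ⟨hi.1, hi.2.1⟩ hi.2.2

theorem ford_le (n : ℕ) (Ts : ℕ → EufTerm Fn Pr) (e : EufExpr Fn Pr) : ford n Ts e ≤ n :=
  ford_le_of_forall fun _ hi _ => hi.2

/-- The expression `e⁽ⁱ⁾`: `stepT` and `stepF` as one operation on expressions. -/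
noncomputable def step (Ts : ℕ → EufTerm Fn Pr) (vf : ℕ → Fn) (hatS : ℕ → ℕ → EufTerm Fn Pr)
    (k i : ℕ) : EufExpr Fn Pr → EufExpr Fn Pr
  | .t T => .t (stepT Ts vf hatS k i T)
  | .f F => .f (stepF Ts vf hatS k i F)

theorem step_zero (Ts : ℕ → EufTerm Fn Pr) (vf : ℕ → Fn) (hatS : ℕ → ℕ → EufTerm Fn Pr) (k : ℕ)
    (e : EufExpr Fn Pr) : step Ts vf hatS k 0 e = e := by
  cases e <;> rfl

theorem step_succ (Ts : ℕ → EufTerm Fn Pr) (vf : ℕ → Fn) (hatS : ℕ → ℕ → EufTerm Fn Pr)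
    (k i : ℕ) (e : EufExpr Fn Pr) : step Ts vf hatS k (i + 1) e =
      subst (stepT Ts vf hatS k i (Ts (i + 1))) (Uterm vf hatS k (i + 1))
        (step Ts vf hatS k i e) := by
  cases e <;> rfl

/-- The expression `ê = e⁽ᵐ⁾`, `m = o_f(e)`: `hatT` and `hatF` as one operation on expressions. -/
noncomputable def hat (n : ℕ) (Ts : ℕ → EufTerm Fn Pr) (vf : ℕ → Fn)
    (hatS : ℕ → ℕ → EufTerm Fn Pr) (k : ℕ) (e : EufExpr Fn Pr) : EufExpr Fn Pr :=
  step Ts vf hatS k (ford n Ts e) e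

end EufExpr

open Classical in
/-- The extension `J` of `Ĵ` to `f`. A tuple `ds` that is not the value of any list of transformed
arguments gets the junk index `sInf ∅ = 0`; its image is irrelevant. -/
noncomputable def Interp.extendFn {Fn Pr D : Type} (Jh : Interp Fn Pr D) (f : Fn) (k : ℕ)
    (vf : ℕ → Fn) (hatS : ℕ → ℕ → EufTerm Fn Pr) : Interp Fn Pr D where
  fn := Function.update Jh.fn f fun ds =>
    Jh.fn (vf (sInf {j | 1 ≤ j ∧ argValues Jh hatS k j = ds})) []
  pr := Jh.pr

namespace Interp

variable {Fn Pr D : Type} (Jh : Interp Fn Pr D) {f g : Fn} (k : ℕ) (vf : ℕ → Fn)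
  (hatS : ℕ → ℕ → EufTerm Fn Pr)

theorem extendFn_fn_self (f : Fn) (ds : List D) : (Jh.extendFn f k vf hatS).fn f ds =
    Jh.fn (vf (sInf {j | 1 ≤ j ∧ argValues Jh hatS k j = ds})) [] := by
  simp only [extendFn, Function.update_self]

theorem extendFn_fn_of_ne (hg : g ≠ f) : (Jh.extendFn f k vf hatS).fn g = Jh.fn g := by
  classical exact Function.update_of_ne hg _ _

theorem eval_extendFn {e : EufExpr Fn Pr} (he : ¬ FnIn f e) :
    eval (Jh.extendFn f k vf hatS) e = eval Jh e := by
  refine eval_congr (fun g hg => Jh.extendFn_fn_of_ne k vf hatS ?_) fun _ _ => rfl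
  rintro rfl
  exact he hg

end Interp

/-- The elimination of `f` from `G` by nested ITEs in symbols `vf 1, …, vf n` other than `f`: the
terms `Ts i = f(S i 1, …, S i k)` with `1 ≤ i ≤ n` are the `f`-application terms of `G`, subterms
before superterms, and `hatS i l` is the transformed argument `Ŝ_{i,l}`. -/
structure NestedIteElim {Fn Pr : Type} (G : EufFormula Fn Pr) (f : Fn) (k n : ℕ)
    (Ts : ℕ → EufTerm Fn Pr) (S : ℕ → ℕ → EufTerm Fn Pr) (vf : ℕ → Fn)
    (hatS : ℕ → ℕ → EufTerm Fn Pr) : Prop where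
  ts_app : ∀ i ∈ Set.Icc 1 n, Ts i = .app f ((List.range' 1 k).map (S i))
  ts_occurs : ∀ i ∈ Set.Icc 1 n, TermInF (Ts i) G
  ts_complete : ∀ args, TermInF (.app f args) G → ∃ i ∈ Set.Icc 1 n, .app f args = Ts i
  ts_order : ∀ i ∈ Set.Icc 1 n, ∀ j ∈ Set.Icc 1 n, TermInT (Ts i) (Ts j) → i ≠ j → i < j
  vf_ne_f : ∀ i ∈ Set.Icc 1 n, vf i ≠ f
  hatS_spec : ∀ i ∈ Set.Icc 1 n, ∀ l ∈ Set.Icc 1 k, hatS i l = hatT n Ts vf hatS k (S i l)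

namespace NestedIteElim

variable {Fn Pr D : Type} {G : EufFormula Fn Pr} {f : Fn} {k n i l m : ℕ}
  {Ts : ℕ → EufTerm Fn Pr} {S : ℕ → ℕ → EufTerm Fn Pr} {vf : ℕ → Fn}
  {hatS : ℕ → ℕ → EufTerm Fn Pr} {e : EufExpr Fn Pr}

theorem immSub_arg (h : NestedIteElim G f k n Ts S vf hatS) (hi : i ∈ Set.Icc 1 n)
    (hl : l ∈ Set.Icc 1 k) : ImmSub (.t (S i l)) (.t (Ts i)) := by
  rw [h.ts_app i hi]
  refine .appArg (List.mem_map_of_mem (List.mem_range'_1.2 ⟨hl.1, ?_⟩))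
  have := hl.2
  omega

theorem subExpr_arg (h : NestedIteElim G f k n Ts S vf hatS) (hi : i ∈ Set.Icc 1 n)
    (hl : l ∈ Set.Icc 1 k) : SubExpr (.t (S i l)) (.f G) :=
  (h.ts_occurs i hi).head (h.immSub_arg hi hl)

theorem ford_arg_lt (h : NestedIteElim G f k n Ts S vf hatS) (hi : i ∈ Set.Icc 1 n)
    (hl : l ∈ Set.Icc 1 k) : ford n Ts (.t (S i l)) < i := by
  refine Nat.lt_of_le_pred hi.1 (ford_le_of_forall fun j hj hs => Nat.le_pred_of_lt ?_)
  have hSi := h.immSub_arg hi hl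
  refine h.ts_order j hj i hi (hs.tail hSi) ?_
  rintro rfl
  exact not_subExpr_of_immSub hSi hs

theorem exists_of_app_subExpr_step (h : NestedIteElim G f k n Ts S vf hatS)
    (hU : ∀ i ∈ Set.Icc 1 m, ¬ FnIn f (.t (Uterm vf hatS k i))) (he : SubExpr e (.f G))
    {args : List (EufTerm Fn Pr)} (hf : SubExpr (.t (.app f args)) (step Ts vf hatS k m e)) :
    ∃ i, m < i ∧ i ≤ n ∧ SubExpr (.t (Ts i)) e ∧
      EufTerm.app f args = stepT Ts vf hatS k m (Ts i) := by
  induction m generalizing args with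
  | zero =>
    rw [step_zero] at hf
    obtain ⟨i, hi, hTs⟩ := h.ts_complete args (hf.trans he)
    exact ⟨i, hi.1, hi.2, hTs ▸ hf, hTs⟩
  | succ m ih =>
    rw [step_succ] at hf
    rcases subExpr_subst hf with hf | ⟨y, hy, hyA, hsub⟩
    · exact absurd ⟨args, hf⟩ (hU (m + 1) ⟨by omega, le_rfl⟩)
    obtain ⟨args', rfl⟩ := exists_app_of_subst_eq_app hyA hsub
    obtain ⟨i, hmi, hin, hTs, hi⟩ := ih (fun i hi => hU i ⟨hi.1, hi.2.trans m.le_succ⟩) hy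
    have hne : m + 1 ≠ i := by
      rintro rfl
      exact hyA (congrArg EufExpr.t hi)
    refine ⟨i, lt_of_le_of_ne hmi hne, hin, hTs, ?_⟩
    rw [hi] at hsub
    exact (EufExpr.t.inj hsub).symm

theorem not_fnIn_hat_of_uterm (h : NestedIteElim G f k n Ts S vf hatS)
    (hU : ∀ i ∈ Set.Icc 1 (ford n Ts e), ¬ FnIn f (.t (Uterm vf hatS k i)))
    (he : SubExpr e (.f G)) : ¬ FnIn f (hat n Ts vf hatS k e) := by
  rintro ⟨args, hf⟩
  obtain ⟨i, hi, hin, hTs, -⟩ := h.exists_of_app_subExpr_step hU he hf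
  exact hi.not_ge (le_ford ⟨Nat.one_le_of_lt hi, hin⟩ hTs)

theorem not_fnIn_uterm (h : NestedIteElim G f k n Ts S vf hatS) (hi : i ∈ Set.Icc 1 n) :
    ¬ FnIn f (.t (Uterm vf hatS k i)) := by
  induction i using Nat.strong_induction_on with
  | _ i ih =>
    intro hf
    obtain ⟨m, hm, hv | ⟨l, hl, hS⟩⟩ := exists_fnIn_of_fnIn_vterm hi.1 hf
    · exact h.vf_ne_f m ⟨hm.1, hm.2.trans hi.2⟩ hv.symm
    · have hmn : m ∈ Set.Icc 1 n := ⟨hm.1, hm.2.trans hi.2⟩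
      rw [h.hatS_spec m hmn l hl] at hS
      refine h.not_fnIn_hat_of_uterm (fun j hj => ?_) (h.subExpr_arg hmn hl) hS
      have hji : j < i := (hj.2.trans_lt (h.ford_arg_lt hmn hl)).trans_le hm.2
      exact ih j hji ⟨hj.1, hji.le.trans hi.2⟩

theorem not_fnIn_hat (h : NestedIteElim G f k n Ts S vf hatS) (he : SubExpr e (.f G)) :
    ¬ FnIn f (hat n Ts vf hatS k e) :=
  h.not_fnIn_hat_of_uterm
    (fun _ hi => h.not_fnIn_uterm ⟨hi.1, hi.2.trans (ford_le n Ts e)⟩) he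

theorem not_fnInF_elimResult (h : NestedIteElim G f k n Ts S vf hatS) :
    ¬ FnInF f (elimResult G n Ts vf hatS k) := by
  rintro ⟨args, hf⟩
  obtain ⟨i, hi, hin, -⟩ := h.exists_of_app_subExpr_step
    (fun _ => h.not_fnIn_uterm) (e := .f G) .refl hf
  exact hi.not_ge hin

theorem eval_extendFn_hat (h : NestedIteElim G f k n Ts S vf hatS) (Jh : Interp Fn Pr D)
    (he : SubExpr e (.f G)) : eval (Jh.extendFn f k vf hatS) (hat n Ts vf hatS k e) =
      eval Jh (hat n Ts vf hatS k e) :=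
  Jh.eval_extendFn k vf hatS (h.not_fnIn_hat he)

theorem evalT_extendFn_uterm (h : NestedIteElim G f k n Ts S vf hatS) (Jh : Interp Fn Pr D)
    (hi : i ∈ Set.Icc 1 n)
    (hS : ∀ l ∈ Set.Icc 1 k, evalT (Jh.extendFn f k vf hatS) (S i l) =
      evalT (Jh.extendFn f k vf hatS) (hatS i l)) :
    evalT (Jh.extendFn f k vf hatS) (Uterm vf hatS k i) =
      evalT (Jh.extendFn f k vf hatS) (Ts i) := by
  set J := Jh.extendFn f k vf hatS with hJ
  have hargs : argValues J S k i = argValues Jh hatS k i := by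
    refine argValues_congr fun l hl => (hS l hl).trans (Sum.inl.inj (β := Bool) ?_)
    rw [h.hatS_spec i hi l hl]
    exact h.eval_extendFn_hat Jh (h.subExpr_arg hi hl)
  calc evalT J (Uterm vf hatS k i)
      = evalT Jh (Uterm vf hatS k i) :=
        Sum.inl.inj (Jh.eval_extendFn k vf hatS (h.not_fnIn_uterm hi))
    _ = J.fn f (argValues Jh hatS k i) := by
        rw [evalT_uterm hi.1, hJ, Jh.extendFn_fn_self]
    _ = J.fn f (argValues J S k i) := by rw [hargs]
    _ = evalT J (Ts i) := by
        rw [h.ts_app i hi, evalT_app, List.map_map]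
        rfl

theorem eval_extendFn_step (h : NestedIteElim G f k n Ts S vf hatS) (Jh : Interp Fn Pr D)
    (hm : m ≤ n) (e : EufExpr Fn Pr) : eval (Jh.extendFn f k vf hatS) (step Ts vf hatS k m e) =
      eval (Jh.extendFn f k vf hatS) e := by
  induction m using Nat.strong_induction_on generalizing e with
  | _ m ih =>
    cases m with
    | zero => rw [step_zero]
    | succ m =>
      have hi : m + 1 ∈ Set.Icc 1 n := ⟨by omega, hm⟩
      have hU := h.evalT_extendFn_uterm Jh hi fun l hl => by
        rw [h.hatS_spec _ hi l hl]
        have hlt := h.ford_arg_lt hi hl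
        exact (Sum.inl.inj (ih _ hlt (hlt.le.trans hm) (.t (S (m + 1) l)))).symm
      have hT := Sum.inl.inj (ih m m.lt_succ_self (m.le_succ.trans hm) (.t (Ts (m + 1))))
      rw [step_succ, eval_subst (hT.trans hU.symm), ih m m.lt_succ_self (m.le_succ.trans hm)]

theorem eval_extendFn_eq_hat (h : NestedIteElim G f k n Ts S vf hatS) (Jh : Interp Fn Pr D)
    (e : EufExpr Fn Pr) : eval (Jh.extendFn f k vf hatS) e =
      eval (Jh.extendFn f k vf hatS) (hat n Ts vf hatS k e) :=
  (h.eval_extendFn_step Jh (ford_le n Ts e) e).symm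

end NestedIteElim

theorem ElimHyps.nestedIteElim {Fn Pr : Type} {G : EufFormula Fn Pr} {f : Fn} {k n : ℕ}
    {Ts : ℕ → EufTerm Fn Pr} {S : ℕ → ℕ → EufTerm Fn Pr} {vf : ℕ → Fn}
    {hatS : ℕ → ℕ → EufTerm Fn Pr} (he : ElimHyps G f k n Ts S vf hatS) :
    NestedIteElim G f k n Ts S vf hatS where
  ts_app i hi := he.ts_app i hi.1 hi.2
  ts_occurs i hi := he.ts_occurs i hi.1 hi.2
  ts_complete args h :=
    let ⟨i, h1, hn, hi⟩ := he.ts_complete args h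
    ⟨i, ⟨h1, hn⟩, hi⟩
  ts_order i hi j hj := he.ts_order i j hi.1 hi.2 hj.1 hj.2
  vf_ne_f i hi := he.vf_ne_f i hi.1 hi.2
  hatS_spec i hi l hl := he.hatS_spec i l hi.1 hi.2 hl.1 hl.2

theorem hG_G_lemma_general {Fn Pr D : Type} {G : EufFormula Fn Pr} {f : Fn} {k n : ℕ}
    {Ts : ℕ → EufTerm Fn Pr} {S : ℕ → ℕ → EufTerm Fn Pr} {vf : ℕ → Fn}
    {hatS : ℕ → ℕ → EufTerm Fn Pr} (he : NestedIteElim G f k n Ts S vf hatS)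
    (Jh : Interp Fn Pr D) :
    ∃ J : Interp Fn Pr D,
      (∀ g : Fn, FnInF g (elimResult G n Ts vf hatS k) → J.fn g = Jh.fn g) ∧
      (∀ p : Pr, PrInF p (elimResult G n Ts vf hatS k) → J.pr p = Jh.pr p) ∧
      (∀ T : EufTerm Fn Pr, TermInF T G →
        evalT J T = evalT J (hatT n Ts vf hatS k T) ∧
        evalT J (hatT n Ts vf hatS k T) = evalT Jh (hatT n Ts vf hatS k T)) ∧
      (∀ E : EufFormula Fn Pr, FormulaInF E G →
        evalF J E = evalF J (hatF n Ts vf hatS k E) ∧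
        evalF J (hatF n Ts vf hatS k E) = evalF Jh (hatF n Ts vf hatS k E)) := by
  refine ⟨Jh.extendFn f k vf hatS, fun g hg => ?_, fun _ _ => rfl, fun T hT => ⟨?_, ?_⟩,
    fun E hE => ⟨?_, ?_⟩⟩
  · refine Jh.extendFn_fn_of_ne k vf hatS ?_
    rintro rfl
    exact he.not_fnInF_elimResult hg
  · exact Sum.inl.inj (he.eval_extendFn_eq_hat Jh (.t T))
  · exact Sum.inl.inj (he.eval_extendFn_hat Jh hT)
  · exact Sum.inr.inj (he.eval_extendFn_eq_hat Jh (.f E))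
  · exact Sum.inr.inj (he.eval_extendFn_hat Jh hE)

/-- Any interpretation `Ĵ` of the symbols in `Ĝ` can be extended to an
interpretation `J` (of the symbols in both `Ĝ` and `G`) such that for every subexpression
`E` of `G`, `J[E] = J[Ê] = Ĵ[Ê]`. -/
theorem hG_G_lemma {Fn Pr D : Type} [Nonempty D] (G : EufFormula Fn Pr) (f : Fn)
    (k n : ℕ) (Ts : ℕ → EufTerm Fn Pr) (S : ℕ → ℕ → EufTerm Fn Pr) (vf : ℕ → Fn)
    (hatS : ℕ → ℕ → EufTerm Fn Pr) (he : ElimHyps G f k n Ts S vf hatS)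
    (Jh : Interp Fn Pr D) :
    ∃ J : Interp Fn Pr D,
      (∀ g : Fn, FnInF g (elimResult G n Ts vf hatS k) → J.fn g = Jh.fn g) ∧
      (∀ p : Pr, PrInF p (elimResult G n Ts vf hatS k) → J.pr p = Jh.pr p) ∧
      (∀ T : EufTerm Fn Pr, TermInF T G →
        evalT J T = evalT J (hatT n Ts vf hatS k T) ∧
        evalT J (hatT n Ts vf hatS k T) = evalT Jh (hatT n Ts vf hatS k T)) ∧
      (∀ E : EufFormula Fn Pr, FormulaInF E G →
        evalF J E = evalF J (hatF n Ts vf hatS k E) ∧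
        evalF J (hatF n Ts vf hatS k E) = evalF Jh (hatF n Ts vf hatS k E)) :=
  hG_G_lemma_general he.nestedIteElim Jh
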